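/- Let ℓ be a prime with ℓ ≡ 7 (mod 12). Then there exist no integers X, Y, Z with X ≡ 1 (mod 12), Y ≡ 5 (mod 12), Z ≡ 5 (mod 12), and X² + Y² + Z² = 3ℓ². -/

import Mathlib

/-!
If `X² + Y² + Z² = 3ℓ²` and `S = X + Y + Z`, then `(3ℓ - S)(3ℓ + S) = 2(a² + ab + b²)` with
`a = X - Y` and `b = Y - Z`. The right-hand side is nonnegative, so `t = (3ℓ - S) / 2` is too, and
the residues give `t ≡ 5 (mod 6)`; so some odd prime `q ≡ 2 (mod 3)` divides `t` to an odd power.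
Such a prime is inert in `ℤ[ω]`, so it divides the norm `a² + ab + b² = t(3ℓ + S)` to an even power.
Hence `q` divides `3ℓ + S` too, and therefore `2t + (3ℓ + S) = 6ℓ`, so `q ∣ ℓ`, whereas the only
prime factor of `ℓ` is `ℓ ≡ 1 (mod 3)`.
-/

section FiniteField

variable {K : Type*} [Field K] [Fintype K]

theorem sq_add_self_add_one_ne_zero_of_card_mod_three_eq_two (hK : Fintype.card K % 3 = 2)
    (c : K) : c ^ 2 + c + 1 ≠ 0 := by
  intro hc
  obtain ⟨k, hk⟩ : ∃ k, Fintype.card K = 3 * k + 2 := ⟨Fintype.card K / 3, by omega⟩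
  have hcube : c ^ 3 = 1 := by linear_combination (c - 1) * hc
  have hsq : c ^ 2 = c := by
    calc c ^ 2 = c ^ (3 * k + 2) := by rw [pow_add, pow_mul, hcube, one_pow, one_mul]
      _ = c := by rw [← hk, FiniteField.pow_card]
  have hc_one : c = 1 := by linear_combination hcube - (c + 1) * hsq
  have hthree : (3 : K) = 0 := by
    rw [hc_one] at hc
    linear_combination hc
  have hcard : (3 * k + 2 : K) = 0 := by
    exact_mod_cast hk ▸ Nat.cast_card_eq_zero K
  exact one_ne_zero (α := K) (by linear_combination (k + 1) * hthree - hcard)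

theorem eq_zero_and_eq_zero_of_sq_add_mul_add_sq_eq_zero (hK : Fintype.card K % 3 = 2)
    {a b : K} (h : a ^ 2 + a * b + b ^ 2 = 0) : a = 0 ∧ b = 0 := by
  have hb : b = 0 := by
    by_contra hb
    apply sq_add_self_add_one_ne_zero_of_card_mod_three_eq_two hK (a / b)
    field_simp
    linear_combination h
  exact ⟨by simpa [hb] using h, hb⟩

end FiniteField

section PrimeTwoModThree

variable {q : ℕ} [Fact q.Prime]

theorem dvd_and_dvd_of_dvd_sq_add_mul_add_sq (hq : q % 3 = 2) {a b : ℤ}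
    (h : (q : ℤ) ∣ a ^ 2 + a * b + b ^ 2) : (q : ℤ) ∣ a ∧ (q : ℤ) ∣ b := by
  simp only [← ZMod.intCast_zmod_eq_zero_iff_dvd] at h ⊢
  push_cast at h
  exact eq_zero_and_eq_zero_of_sq_add_mul_add_sq_eq_zero (by rwa [ZMod.card]) h

theorem even_padicValInt_sq_add_mul_add_sq (hq : q % 3 = 2) (a b : ℤ) :
    Even (padicValInt q (a ^ 2 + a * b + b ^ 2)) := by
  rcases (Int.gcd a b).eq_zero_or_pos with hgcd | hgcd
  · obtain ⟨rfl, rfl⟩ := Int.gcd_eq_zero_iff.1 hgcd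
    simp
  obtain ⟨g, a, b, hg, hab, rfl, rfl⟩ := Int.exists_gcd_one' hgcd
  have hndvd : ¬(q : ℤ) ∣ a ^ 2 + a * b + b ^ 2 := fun h ↦ by
    obtain ⟨ha, hb⟩ := dvd_and_dvd_of_dvd_sq_add_mul_add_sq hq h
    have hq_dvd_one : q ∣ 1 := hab ▸ Int.dvd_gcd ha hb
    exact (Fact.out : q.Prime).not_dvd_one hq_dvd_one
  have hg_ne : (g : ℤ) ≠ 0 := by exact_mod_cast hg.ne'
  have hnorm_ne : a ^ 2 + a * b + b ^ 2 ≠ 0 := fun h ↦ hndvd (h ▸ dvd_zero _)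
  have hfactor : (a * g) ^ 2 + a * g * (b * g) + (b * g) ^ 2
      = g * g * (a ^ 2 + a * b + b ^ 2) := by ring
  rw [hfactor, padicValInt.mul (mul_ne_zero hg_ne hg_ne) hnorm_ne, padicValInt.mul hg_ne hg_ne,
    padicValInt.eq_zero_of_not_dvd hndvd, add_zero]
  exact Even.add_self _

end PrimeTwoModThree

theorem exists_prime_mod_three_eq_two_and_dvd {n : ℕ} (hn : n % 3 = 2) :
    ∃ q : ℕ, q.Prime ∧ q % 3 = 2 ∧ q ∣ n := by
  induction n using induction_on_primes with
  | zero => simp at hn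
  | one => simp at hn
  | prime_mul p n hp ih =>
    by_cases hp3 : p % 3 = 2
    · exact ⟨p, hp, hp3, dvd_mul_right p n⟩
    · have hn3 : n % 3 = 2 := by
        rw [Nat.mul_mod] at hn
        have : p % 3 = 0 ∨ p % 3 = 1 := by omega
        rcases this with h | h <;> simp_all
      obtain ⟨q, hq, hq3, hqn⟩ := ih hn3
      exact ⟨q, hq, hq3, hqn.mul_left p⟩

theorem exists_prime_mod_three_eq_two_and_odd_padicValNat {n : ℕ} (hn : n % 3 = 2) :
    ∃ q : ℕ, q.Prime ∧ q % 3 = 2 ∧ Odd (padicValNat q n) := by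
  obtain ⟨m, s, hm_pos, hs_pos, rfl, hm⟩ :=
    Nat.sq_mul_squarefree_of_pos (n := n) (by omega)
  have hm3 : m % 3 = 2 := by
    rw [Nat.mul_mod, Nat.pow_mod] at hn
    have : s % 3 = 0 ∨ s % 3 = 1 ∨ s % 3 = 2 := by omega
    rcases this with h | h | h <;> simp_all
  obtain ⟨q, hq, hq3, hqm⟩ := exists_prime_mod_three_eq_two_and_dvd hm3
  have : Fact q.Prime := ⟨hq⟩
  have hval : padicValNat q m = 1 := by
    have hle : m.factorization q ≤ 1 := hm.natFactorization_le_one q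
    rw [Nat.factorization_def m hq] at hle
    exact hle.antisymm (one_le_padicValNat_of_dvd hm_pos.ne' hqm)
  refine ⟨q, hq, hq3, ?_⟩
  rw [padicValNat.mul (by positivity) hm_pos.ne', padicValNat.pow, hval]
  exact (even_two_mul _).add_one

theorem exists_prime_dvd_and_dvd_of_mul_eq_sq_add_mul_add_sq {n : ℕ} {m a b : ℤ}
    (hn : n % 3 = 2) (h : n * m = a ^ 2 + a * b + b ^ 2) :
    ∃ q : ℕ, q.Prime ∧ q % 3 = 2 ∧ q ∣ n ∧ (q : ℤ) ∣ m := by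
  obtain ⟨q, hq, hq3, hodd⟩ := exists_prime_mod_three_eq_two_and_odd_padicValNat hn
  have : Fact q.Prime := ⟨hq⟩
  refine ⟨q, hq, hq3, dvd_of_one_le_padicValNat hodd.pos, ?_⟩
  by_contra hqm
  have hn_ne : (n : ℤ) ≠ 0 := by omega
  have hm_ne : m ≠ 0 := fun hm ↦ hqm (hm ▸ dvd_zero _)
  have heven := even_padicValInt_sq_add_mul_add_sq hq3 a b
  rw [← h, padicValInt.mul hn_ne hm_ne, padicValInt.of_nat,
    padicValInt.eq_zero_of_not_dvd hqm, add_zero] at heven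
  exact Nat.not_even_iff_odd.2 hodd heven

theorem sub_mul_add_eq_two_mul_of_sq_add_sq_add_sq_eq {R : Type*} [CommRing R] {n x y z : R}
    (h : x ^ 2 + y ^ 2 + z ^ 2 = 3 * n ^ 2) :
    (3 * n - (x + y + z)) * (3 * n + (x + y + z)) =
      2 * ((x - y) ^ 2 + (x - y) * (y - z) + (y - z) ^ 2) := by
  linear_combination -3 * h

theorem add_add_le_three_mul_of_sq_add_sq_add_sq_eq {R : Type*} [CommRing R] [LinearOrder R]
    [IsStrictOrderedRing R] {n x y z : R} (hn : 0 ≤ n)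
    (h : x ^ 2 + y ^ 2 + z ^ 2 = 3 * n ^ 2) : x + y + z ≤ 3 * n := by
  have hsq : (x + y + z) ^ 2 ≤ (3 * n) ^ 2 := by
    linarith [sq_nonneg (x - y), sq_nonneg (y - z), sq_nonneg (x - z)]
  exact le_of_sq_le_sq hsq (by positivity)

theorem no_solution_one_five_five_mod_twelve_general {ℓ : ℕ}
    (hℓ : ∀ q : ℕ, q.Prime → q ∣ ℓ → q % 3 ≠ 2) {X Y Z : ℤ}
    (hmod : (3 * (ℓ : ℤ) - (X + Y + Z)) % 12 = 10) :
    X ^ 2 + Y ^ 2 + Z ^ 2 ≠ 3 * (ℓ : ℤ) ^ 2 := by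
  intro h
  obtain ⟨t, ht⟩ : ∃ t : ℤ, 3 * (ℓ : ℤ) - (X + Y + Z) = 2 * t :=
    even_iff_exists_two_mul.1 (by rw [Int.even_iff]; omega)
  have hsum := add_add_le_three_mul_of_sq_add_sq_add_sq_eq (Int.natCast_nonneg ℓ) h
  lift t to ℕ using by omega
  have hnorm : t * (3 * (ℓ : ℤ) + (X + Y + Z)) =
      (X - Y) ^ 2 + (X - Y) * (Y - Z) + (Y - Z) ^ 2 := by
    have hprod := sub_mul_add_eq_two_mul_of_sq_add_sq_add_sq_eq h
    rw [ht, mul_assoc] at hprod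
    exact mul_left_cancel₀ two_ne_zero hprod
  obtain ⟨q, hq, hq3, hqt, hqu⟩ :=
    exists_prime_dvd_and_dvd_of_mul_eq_sq_add_mul_add_sq (by omega) hnorm
  have hq_dvd : q ∣ 6 * ℓ := by
    have hsix : ((6 * ℓ : ℕ) : ℤ) = 2 * t + (3 * ℓ + (X + Y + Z)) := by
      push_cast
      linear_combination ht
    rw [← Int.natCast_dvd_natCast, hsix]
    exact ((Int.natCast_dvd_natCast.2 hqt).mul_left 2).add hqu
  have hq_coprime : q.Coprime 6 := by
    refine hq.coprime_iff_not_dvd.2 fun hq6 ↦ ?_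
    have hq_le : q ≤ 6 := Nat.le_of_dvd (by norm_num) hq6
    interval_cases q <;> omega
  exact hℓ q hq (hq_coprime.dvd_of_dvd_mul_left hq_dvd) hq3

theorem no_solution_one_five_five_mod_twelve (ℓ : ℕ) (hℓ : ℓ.Prime) (h12 : ℓ % 12 = 7) :
    ¬ ∃ X Y Z : ℤ, X % 12 = 1 ∧ Y % 12 = 5 ∧ Z % 12 = 5 ∧
      X ^ 2 + Y ^ 2 + Z ^ 2 = 3 * (ℓ : ℤ) ^ 2 := by
  rintro ⟨X, Y, Z, hX, hY, hZ, h⟩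
  refine no_solution_one_five_five_mod_twelve_general (fun q hq hqℓ ↦ ?_) (by omega) h
  rw [(Nat.prime_dvd_prime_iff_eq hq hℓ).1 hqℓ]
  omega
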